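/- Let Z = max_{1≤k≤K} Y_k as above. Then the expected maximum satisfies E[Z] = ∫_0^∞ K t ∫_0^∞ [r^{N-1} exp(-r/2)/(2^{N+1} Γ(N))] [1 - Q_N(√((μ²/(1-μ²))r), √t)]^{K-1} [Q_N(√((μ²/(1-μ²))r), √t) - Q_{N-1}(√((μ²/(1-μ²))r), √t)] dr dt, provided Z is integrable. -/

import Mathlib

open MeasureTheory ProbabilityTheory Real Set Filter

/-- Modified Bessel function of the first kind of (integer) order `n`. -/
noncomputable def besselI (n : ℕ) (x : ℝ) : ℝ :=
  ∑' m : ℕ, (x / 2) ^ (2 * m + n) / ((Nat.factorial m : ℝ) * (Nat.factorial (m + n)))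

/-- `N`-th order Marcum Q-function, `Q_N(a,b) = ∫_b^∞ x (x/a)^{N-1} e^{-(x²+a²)/2} I_{N-1}(ax) dx`,
with its continuous extension (the regularized upper incomplete gamma tail) at `a = 0`. -/
noncomputable def marcumQ (N : ℕ) (a b : ℝ) : ℝ :=
  if a = 0 then
    ∫ x in Ioi b, x ^ (2 * N - 1) * Real.exp (-(x ^ 2) / 2) /
      (2 ^ (N - 1) * (Nat.factorial (N - 1) : ℝ))
  else
    ∫ x in Ioi b, x * (x / a) ^ (N - 1) * Real.exp (-(x ^ 2 + a ^ 2) / 2)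
      * besselI (N - 1) (a * x)

/-- Density of the noncentral chi-squared distribution with `2N` degrees of freedom and
noncentrality `lam` (for `lam = 0` it is the central chi-squared density with `2N` dof). -/
noncomputable def ncChiSqPdf (N : ℕ) (lam h : ℝ) : ℝ :=
  if lam = 0 then h ^ (N - 1) * Real.exp (-h / 2) / (2 ^ N * Real.Gamma N)
  else (1 / 2) * (h / lam) ^ (((N : ℝ) - 1) / 2) * Real.exp (-(h + lam) / 2)
      * besselI (N - 1) (Real.sqrt (lam * h))

/-- Noncentral chi-squared distribution with `2N` degrees of freedom and noncentrality `lam`. -/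
noncomputable def ncChiSq (N : ℕ) (lam : ℝ) : Measure ℝ :=
  volume.withDensity fun h => ENNReal.ofReal (if 0 < h then ncChiSqPdf N lam h else 0)

/-!
The noncentral chi-squared density `f_N` with `2N` degrees of freedom and noncentrality `λ` is a
Poisson mixture of central densities `g_m`, and the substitution `s = x ^ 2` identifies its tail
with the Marcum function: `∫_t^∞ f_N = Q_N(√λ, √t)`. The central densities satisfy
`2 g_m' = g_{m-1} - g_m`, so integrating over `(t, ∞)` and mixing gives `Q_N - Q_{N-1} = 2 f_N`.
Conditionally on `r₀ = r`, the maximum of `K` i.i.d. copies has distribution function `(1 - Q_N)^K`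
and hence density `K (1 - Q_N)^(K-1) (Q_N - Q_{N-1}) / 2`. Integrability of `Z` then allows Fubini's
theorem to exchange the integral over `t` with the mixing over `r`.
-/

/-! ### Central chi-squared densities -/

/-- Density at `t ≥ 0` of the central chi-squared law with `2(n+1)` degrees of freedom. The index is
shifted so that the order `N ≥ 1` of the law corresponds to `n = N - 1`; the formula is kept on all
of `ℝ`, where it is continuous. -/
noncomputable def chiSqPdf (n : ℕ) (t : ℝ) : ℝ :=
  t ^ n * Real.exp (-t / 2) / (2 ^ (n + 1) * (n.factorial : ℝ))

lemma chiSqPdf_nonneg (n : ℕ) {t : ℝ} (ht : 0 ≤ t) : 0 ≤ chiSqPdf n t := by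
  unfold chiSqPdf; positivity

@[fun_prop]
lemma continuous_chiSqPdf (n : ℕ) : Continuous (chiSqPdf n) := by
  unfold chiSqPdf; fun_prop

lemma abs_chiSqPdf_le (n : ℕ) (t : ℝ) : |chiSqPdf n t| ≤ Real.exp |t| := by
  have hpow : |t| ^ n / (2 ^ (n + 1) * (n.factorial : ℝ)) ≤ Real.exp (|t| / 2) :=
    calc |t| ^ n / (2 ^ (n + 1) * (n.factorial : ℝ))
        ≤ |t| ^ n / (2 ^ n * (n.factorial : ℝ)) := by gcongr <;> norm_num
      _ = (|t| / 2) ^ n / (n.factorial : ℝ) := by rw [div_pow, div_div]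
      _ ≤ Real.exp (|t| / 2) := Real.pow_div_factorial_le_exp _ (by positivity) n
  have hexp : Real.exp (-t / 2) ≤ Real.exp (|t| / 2) := by
    gcongr; exact neg_le_abs t
  calc |chiSqPdf n t|
      = |t| ^ n / (2 ^ (n + 1) * (n.factorial : ℝ)) * Real.exp (-t / 2) := by
        simp only [chiSqPdf, abs_div, abs_mul, abs_pow, Real.abs_exp, Nat.abs_cast, Nat.abs_ofNat]
        ring
    _ ≤ Real.exp (|t| / 2) * Real.exp (|t| / 2) := by gcongr
    _ = Real.exp |t| := by rw [← Real.exp_add, add_halves]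

lemma integral_Ioi_zero_chiSqPdf (n : ℕ) : ∫ t in Ioi 0, chiSqPdf n t = 1 := by
  have hGamma := Real.integral_rpow_mul_exp_neg_mul_Ioi (a := (n : ℝ) + 1) (r := 1 / 2)
    (by positivity) (by norm_num)
  calc ∫ t in Ioi 0, chiSqPdf n t
      = ∫ t in Ioi (0 : ℝ), 1 / (2 ^ (n + 1) * (n.factorial : ℝ)) *
          (t ^ ((n : ℝ) + 1 - 1) * Real.exp (-(1 / 2 * t))) := by
        refine setIntegral_congr_fun measurableSet_Ioi fun t _ => ?_
        simp only [chiSqPdf, add_sub_cancel_right, Real.rpow_natCast,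
          show -(1 / 2 * t) = -t / 2 by ring]
        ring
    _ = 1 := by
        rw [integral_const_mul, hGamma, Real.Gamma_nat_eq_factorial, one_div_one_div,
          ← Nat.cast_succ, Real.rpow_natCast]
        field_simp

lemma integrableOn_chiSqPdf (n : ℕ) {t : ℝ} (ht : 0 ≤ t) : IntegrableOn (chiSqPdf n) (Ioi t) :=
  IntegrableOn.mono_set (integrable_of_integral_eq_one (integral_Ioi_zero_chiSqPdf n))
    (Ioi_subset_Ioi ht)

lemma integral_Ioi_chiSqPdf_nonneg (n : ℕ) {t : ℝ} (ht : 0 ≤ t) : 0 ≤ ∫ s in Ioi t, chiSqPdf n s :=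
  setIntegral_nonneg measurableSet_Ioi fun _ hs => chiSqPdf_nonneg n (ht.trans hs.le)

lemma integral_Ioi_chiSqPdf_le_one (n : ℕ) {t : ℝ} (ht : 0 ≤ t) :
    ∫ s in Ioi t, chiSqPdf n s ≤ 1 := by
  rw [← integral_Ioi_zero_chiSqPdf n]
  exact setIntegral_mono_set (integrableOn_chiSqPdf n le_rfl)
    (ae_restrict_of_forall_mem measurableSet_Ioi fun _ hs => chiSqPdf_nonneg n hs.le)
    (Ioi_subset_Ioi ht).eventuallyLE

lemma hasDerivAt_chiSqPdf_succ (n : ℕ) (t : ℝ) :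
    HasDerivAt (chiSqPdf (n + 1)) ((chiSqPdf n t - chiSqPdf (n + 1) t) / 2) t := by
  have hexp : HasDerivAt (fun x : ℝ => Real.exp (-x / 2)) (Real.exp (-t / 2) * (-1 / 2)) t :=
    ((hasDerivAt_id t).neg.div_const 2).exp
  refine (((hasDerivAt_pow (n + 1) t).mul hexp).div_const
    (2 ^ (n + 1 + 1) * ((n + 1).factorial : ℝ))).congr_deriv ?_
  simp only [chiSqPdf, Nat.factorial_succ, Nat.add_sub_cancel]
  push_cast
  field_simp
  ring

lemma tendsto_chiSqPdf_atTop (n : ℕ) : Tendsto (chiSqPdf n) atTop (nhds 0) := by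
  have hhalf := ((tendsto_pow_mul_exp_neg_atTop_nhds_zero n).comp
    (tendsto_id.atTop_div_const (r := (2 : ℝ)) two_pos)).const_mul (1 / (2 * (n.factorial : ℝ)))
  rw [mul_zero] at hhalf
  refine hhalf.congr fun x => ?_
  simp only [chiSqPdf, Function.comp, id, neg_div, div_pow]
  field_simp
  ring

lemma integral_Ioi_chiSqPdf_succ_sub (n : ℕ) {t : ℝ} (ht : 0 ≤ t) :
    (∫ s in Ioi t, chiSqPdf (n + 1) s) - ∫ s in Ioi t, chiSqPdf n s = 2 * chiSqPdf (n + 1) t := by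
  have hint := ((integrableOn_chiSqPdf n ht).sub (integrableOn_chiSqPdf (n + 1) ht)).div_const 2
  have hFTC := integral_Ioi_of_hasDerivAt_of_tendsto'
    (fun x _ => hasDerivAt_chiSqPdf_succ n x) hint (tendsto_chiSqPdf_atTop (n + 1))
  rw [integral_div, integral_sub (integrableOn_chiSqPdf n ht) (integrableOn_chiSqPdf (n + 1) ht)]
    at hFTC
  linarith

/-! ### Noncentral chi-squared densities as Poisson mixtures -/

/-- Probability `e^{-x} x^m / m!` of the value `m` under the Poisson law of rate `x`. Real (rather
than nonnegative real) rates are allowed, so that continuity in the rate is available on `ℝ`. -/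
noncomputable def poissonWeight (x : ℝ) (m : ℕ) : ℝ := Real.exp (-x) * (x ^ m / (m.factorial : ℝ))

lemma poissonWeight_nonneg {x : ℝ} (hx : 0 ≤ x) (m : ℕ) : 0 ≤ poissonWeight x m := by
  unfold poissonWeight; positivity

lemma hasSum_poissonWeight (x : ℝ) : HasSum (poissonWeight x) 1 := by
  have hsum := (NormedSpace.expSeries_div_hasSum_exp x).mul_left (Real.exp (-x))
  rwa [← Real.exp_eq_exp_ℝ, ← Real.exp_add, neg_add_cancel, Real.exp_zero] at hsum

lemma abs_poissonWeight_le (x : ℝ) (m : ℕ) :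
    |poissonWeight x m| ≤ Real.exp |x| * (|x| ^ m / (m.factorial : ℝ)) := by
  rw [poissonWeight, abs_mul, Real.abs_exp, abs_div, abs_pow, Nat.abs_cast]
  gcongr
  exact neg_le_abs x

/-- Density at `t ≥ 0` of the noncentral chi-squared law with `2(n+1)` degrees of freedom and
noncentrality `l`, written as the mixture of the central densities with `2(n+1+m)` degrees of
freedom, where `m` is Poisson of rate `l / 2`. Unlike `ncChiSqPdf` it is continuous on `ℝ × ℝ`. -/
noncomputable def poissonChiSqPdf (n : ℕ) (l t : ℝ) : ℝ :=
  ∑' m : ℕ, poissonWeight (l / 2) m * chiSqPdf (n + m) t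

lemma abs_poissonWeight_mul_chiSqPdf_le (n m : ℕ) {R l t : ℝ} (hl : |l| ≤ R) (ht : |t| ≤ R) :
    ‖poissonWeight (l / 2) m * chiSqPdf (n + m) t‖ ≤
      Real.exp R * Real.exp R * (R ^ m / (m.factorial : ℝ)) := by
  have hhalf : |l / 2| ≤ R := by
    rw [abs_div, abs_two]; linarith [abs_nonneg l]
  have hR : 0 ≤ R := (abs_nonneg t).trans ht
  calc ‖poissonWeight (l / 2) m * chiSqPdf (n + m) t‖
      = |poissonWeight (l / 2) m| * |chiSqPdf (n + m) t| := by rw [Real.norm_eq_abs, abs_mul]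
    _ ≤ Real.exp |l / 2| * (|l / 2| ^ m / (m.factorial : ℝ)) * Real.exp |t| := by
        gcongr
        exacts [abs_poissonWeight_le _ m, abs_chiSqPdf_le _ t]
    _ ≤ Real.exp R * (R ^ m / (m.factorial : ℝ)) * Real.exp R := by gcongr
    _ = Real.exp R * Real.exp R * (R ^ m / (m.factorial : ℝ)) := by ring

lemma summable_poissonWeight_mul_chiSqPdf (n : ℕ) (l t : ℝ) :
    Summable fun m => poissonWeight (l / 2) m * chiSqPdf (n + m) t :=
  .of_norm_bounded ((Real.summable_pow_div_factorial (max |l| |t|)).mul_left _) fun m =>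
    abs_poissonWeight_mul_chiSqPdf_le n m (le_max_left _ _) (le_max_right _ _)

lemma continuous_uncurry_poissonChiSqPdf (n : ℕ) :
    Continuous (Function.uncurry (poissonChiSqPdf n)) := by
  refine continuous_iff_continuousAt.2 fun z => ?_
  have hball : ContinuousOn (Function.uncurry (poissonChiSqPdf n))
      (Metric.ball 0 (‖z‖ + 1)) := by
    refine continuousOn_tsum (fun m => ?_)
      ((Real.summable_pow_div_factorial (‖z‖ + 1)).mul_left
        (Real.exp (‖z‖ + 1) * Real.exp (‖z‖ + 1)))
      fun m x hx => ?_
    · unfold poissonWeight; fun_prop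
    · have hx' : ‖x‖ ≤ ‖z‖ + 1 := (mem_ball_zero_iff.1 hx).le
      exact abs_poissonWeight_mul_chiSqPdf_le n m ((norm_fst_le x).trans hx')
        ((norm_snd_le x).trans hx')
  exact hball.continuousAt (Metric.isOpen_ball.mem_nhds (by simp))

@[fun_prop]
lemma continuous_poissonChiSqPdf {X : Type*} [TopologicalSpace X] (n : ℕ) {f g : X → ℝ}
    (hf : Continuous f) (hg : Continuous g) : Continuous fun x => poissonChiSqPdf n (f x) (g x) :=
  (continuous_uncurry_poissonChiSqPdf n).comp (hf.prodMk hg)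

lemma poissonChiSqPdf_nonneg (n : ℕ) {l t : ℝ} (hl : 0 ≤ l) (ht : 0 ≤ t) :
    0 ≤ poissonChiSqPdf n l t :=
  tsum_nonneg fun m => mul_nonneg (poissonWeight_nonneg (by positivity) m) (chiSqPdf_nonneg _ ht)

lemma poissonChiSqPdf_zero_left (n : ℕ) (t : ℝ) : poissonChiSqPdf n 0 t = chiSqPdf n t := by
  rw [poissonChiSqPdf, tsum_eq_single 0 fun m hm => by simp [poissonWeight, hm]]
  simp [poissonWeight]

lemma hasSum_integral_Ioi_poissonChiSqPdf (n : ℕ) {l t : ℝ} (hl : 0 ≤ l) (ht : 0 ≤ t) :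
    HasSum (fun m => poissonWeight (l / 2) m * ∫ s in Ioi t, chiSqPdf (n + m) s)
      (∫ s in Ioi t, poissonChiSqPdf n l s) := by
  have hw : ∀ m, 0 ≤ poissonWeight (l / 2) m := poissonWeight_nonneg (by positivity)
  have hnorm : ∀ m, ∫ s in Ioi t, ‖poissonWeight (l / 2) m * chiSqPdf (n + m) s‖ =
      poissonWeight (l / 2) m * ∫ s in Ioi t, chiSqPdf (n + m) s := fun m => by
    rw [← integral_const_mul]
    exact setIntegral_congr_fun measurableSet_Ioi fun s hs =>
      Real.norm_of_nonneg (mul_nonneg (hw m) (chiSqPdf_nonneg _ (ht.trans hs.le)))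
  have hsummable : Summable fun m => poissonWeight (l / 2) m * ∫ s in Ioi t, chiSqPdf (n + m) s :=
    .of_nonneg_of_le (fun m => mul_nonneg (hw m) (integral_Ioi_chiSqPdf_nonneg _ ht))
      (fun m => mul_le_of_le_one_right (hw m) (integral_Ioi_chiSqPdf_le_one _ ht))
      (hasSum_poissonWeight _).summable
  simpa only [integral_const_mul, poissonChiSqPdf] using hasSum_integral_of_summable_integral_norm
    (fun m => (integrableOn_chiSqPdf (n + m) ht).const_mul (poissonWeight (l / 2) m))
    (by simpa only [hnorm] using hsummable)

lemma integral_Ioi_zero_poissonChiSqPdf (n : ℕ) {l : ℝ} (hl : 0 ≤ l) :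
    ∫ s in Ioi 0, poissonChiSqPdf n l s = 1 := by
  have hsum := hasSum_integral_Ioi_poissonChiSqPdf n hl le_rfl
  simp only [integral_Ioi_zero_chiSqPdf, mul_one] at hsum
  exact hsum.unique (hasSum_poissonWeight _)

lemma integrableOn_poissonChiSqPdf (n : ℕ) {l : ℝ} (hl : 0 ≤ l) :
    IntegrableOn (poissonChiSqPdf n l) (Ioi 0) :=
  integrable_of_integral_eq_one (integral_Ioi_zero_poissonChiSqPdf n hl)

lemma integral_Ioi_poissonChiSqPdf_succ_sub (n : ℕ) {l t : ℝ} (hl : 0 ≤ l) (ht : 0 ≤ t) :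
    (∫ s in Ioi t, poissonChiSqPdf (n + 1) l s) - ∫ s in Ioi t, poissonChiSqPdf n l s =
      2 * poissonChiSqPdf (n + 1) l t := by
  refine ((hasSum_integral_Ioi_poissonChiSqPdf (n + 1) hl ht).sub
    (hasSum_integral_Ioi_poissonChiSqPdf n hl ht)).unique
    (((summable_poissonWeight_mul_chiSqPdf (n + 1) l t).hasSum.mul_left 2).congr_fun fun m => ?_)
  rw [← mul_sub, add_right_comm, integral_Ioi_chiSqPdf_succ_sub _ ht, mul_left_comm]

/-! ### Bessel and Marcum functions -/

lemma mul_besselI_eq_poissonChiSqPdf (n : ℕ) {a x : ℝ} (ha : 0 < a) (hx : 0 < x) :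
    (x / a) ^ n * Real.exp (-(x ^ 2 + a ^ 2) / 2) * besselI n (a * x) =
      2 * poissonChiSqPdf n (a ^ 2) (x ^ 2) := by
  unfold besselI poissonChiSqPdf
  rw [← tsum_mul_left, ← tsum_mul_left]
  congr 1 with m
  have hexp : Real.exp (-(x ^ 2 + a ^ 2) / 2) =
      Real.exp (-(a ^ 2 / 2)) * Real.exp (-x ^ 2 / 2) := by
    rw [← Real.exp_add]; ring_nf
  simp only [poissonWeight, chiSqPdf, hexp, Nat.add_comm m n, div_pow, mul_pow, pow_add, pow_mul]
  field_simp
  simp only [← pow_mul]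
  ring_nf

lemma ncChiSqPdf_eq_poissonChiSqPdf (n : ℕ) {l t : ℝ} (hl : 0 ≤ l) (ht : 0 < t) :
    ncChiSqPdf (n + 1) l t = poissonChiSqPdf n l t := by
  unfold ncChiSqPdf
  split_ifs with h0
  · rw [h0, poissonChiSqPdf_zero_left, chiSqPdf, Nat.cast_succ, Real.Gamma_nat_eq_factorial,
      Nat.add_sub_cancel]
  · have hbessel := mul_besselI_eq_poissonChiSqPdf n
      (Real.sqrt_pos.2 (hl.lt_of_ne' h0)) (Real.sqrt_pos.2 ht)
    rw [Real.sq_sqrt hl, Real.sq_sqrt ht.le] at hbessel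
    have hpow : (t / l) ^ ((((n + 1 : ℕ) : ℝ) - 1) / 2) = (√t / √l) ^ n := by
      rw [← Real.sqrt_div ht.le, Real.sqrt_eq_rpow, ← Real.rpow_natCast,
        ← Real.rpow_mul (by positivity), Nat.cast_succ, add_sub_cancel_right]
      ring_nf
    rw [Real.sqrt_mul hl, Nat.add_sub_cancel, hpow]
    linear_combination (1 / 2) * hbessel

-- For `l < 0`, `√(l * t)` takes the junk value `0`, where `besselI (n + 1)` vanishes.
lemma ncChiSqPdf_of_neg (n : ℕ) {l t : ℝ} (hl : l < 0) (ht : 0 < t) :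
    ncChiSqPdf (n + 2) l t = 0 := by
  have hbessel : besselI (n + 1) 0 = 0 := by simp [besselI]
  rw [ncChiSqPdf, if_neg hl.ne,
    Real.sqrt_eq_zero_of_nonpos (mul_nonpos_of_nonpos_of_nonneg hl.le ht.le)]
  exact mul_eq_zero_of_right _ hbessel

lemma integral_Ioi_sqrt_comp_sq {t : ℝ} (ht : 0 ≤ t) (g : ℝ → ℝ) :
    ∫ x in Ioi √t, 2 * x * g (x ^ 2) = ∫ s in Ioi t, g s := by
  simpa [Real.sqrt_eq_rpow, show (2 : ℝ) - 1 = 1 by norm_num] using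
    integral_comp_rpow_Ioi_of_pos' (g := g) two_pos ht

lemma marcumQ_sqrt_sqrt (n : ℕ) {l t : ℝ} (hl : 0 ≤ l) (ht : 0 ≤ t) :
    marcumQ (n + 1) √l √t = ∫ s in Ioi t, poissonChiSqPdf n l s := by
  rw [← integral_Ioi_sqrt_comp_sq ht, marcumQ]
  split_ifs with h0 <;> refine setIntegral_congr_fun measurableSet_Ioi fun x hx => ?_
  · simp only [(Real.sqrt_eq_zero hl).1 h0, poissonChiSqPdf_zero_left, chiSqPdf,
      Nat.add_sub_cancel, show 2 * (n + 1) - 1 = 2 * n + 1 by omega]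
    field_simp
    ring
  · have hbessel := mul_besselI_eq_poissonChiSqPdf n
      ((Real.sqrt_nonneg l).lt_of_ne' h0) ((Real.sqrt_nonneg t).trans_lt hx)
    simp only [Nat.add_sub_cancel]
    rw [Real.sq_sqrt hl] at hbessel ⊢
    linear_combination x * hbessel

/-! ### Laws with a density on the positive half-line -/

/-- The measure on `ℝ` carried by `(0, ∞)` with density `f` there; the values of `f` on `(-∞, 0]`
are ignored, and negative values of `f` count as `0`. -/
noncomputable def halfLineMeasure (f : ℝ → ℝ) : Measure ℝ :=
  (volume.restrict (Ioi 0)).withDensity fun t => ENNReal.ofReal (f t)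

lemma halfLineMeasure_congr {f g : ℝ → ℝ} (h : EqOn f g (Ioi 0)) :
    halfLineMeasure f = halfLineMeasure g :=
  withDensity_congr_ae <| ae_restrict_of_forall_mem measurableSet_Ioi fun _ ht =>
    congrArg ENNReal.ofReal (h ht)

lemma ae_pos_halfLineMeasure (f : ℝ → ℝ) : ∀ᵐ t ∂halfLineMeasure f, 0 < t :=
  (withDensity_absolutelyContinuous _ _).ae_le (ae_restrict_mem measurableSet_Ioi)

lemma isFiniteMeasure_halfLineMeasure {f : ℝ → ℝ} (hf : IntegrableOn f (Ioi 0)) :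
    IsFiniteMeasure (halfLineMeasure f) :=
  isFiniteMeasure_withDensity_ofReal hf.2

lemma isProbabilityMeasure_halfLineMeasure {f : ℝ → ℝ} (h0 : ∀ t ∈ Ioi 0, 0 ≤ f t)
    (h1 : ∫ t in Ioi 0, f t = 1) : IsProbabilityMeasure (halfLineMeasure f) := by
  constructor
  rw [halfLineMeasure, withDensity_apply _ .univ, Measure.restrict_univ,
    ← ofReal_integral_eq_lintegral_ofReal (integrable_of_integral_eq_one h1)
      (ae_restrict_of_forall_mem measurableSet_Ioi h0), h1, ENNReal.ofReal_one]

lemma integral_halfLineMeasure {f : ℝ → ℝ} (hf : Measurable f) (h0 : ∀ t ∈ Ioi 0, 0 ≤ f t)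
    (g : ℝ → ℝ) : ∫ t, g t ∂halfLineMeasure f = ∫ t in Ioi 0, f t * g t := by
  rw [halfLineMeasure, integral_withDensity_eq_integral_toReal_smul hf.ennreal_ofReal
    (ae_of_all _ fun _ => ENNReal.ofReal_lt_top)]
  refine setIntegral_congr_fun measurableSet_Ioi fun t ht => ?_
  simp only [ENNReal.toReal_ofReal (h0 t ht), smul_eq_mul]

lemma integrable_halfLineMeasure_iff {f : ℝ → ℝ} (hf : Measurable f) (h0 : ∀ t ∈ Ioi 0, 0 ≤ f t)
    (g : ℝ → ℝ) :
    Integrable g (halfLineMeasure f) ↔ IntegrableOn (fun t => f t * g t) (Ioi 0) := by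
  rw [halfLineMeasure, integrable_withDensity_iff_integrable_smul' hf.ennreal_ofReal
    (ae_of_all _ fun _ => ENNReal.ofReal_lt_top)]
  refine integrableOn_congr_fun (fun t ht => ?_) measurableSet_Ioi
  simp only [ENNReal.toReal_ofReal (h0 t ht), smul_eq_mul]

lemma halfLineMeasure_Iic {f : ℝ → ℝ} (hf : Continuous f) (h0 : ∀ t ∈ Ioi 0, 0 ≤ f t) (t : ℝ) :
    halfLineMeasure f (Iic t) = ENNReal.ofReal (∫ s in (0 : ℝ)..max t 0, f s) := by
  have hset : Iic t ∩ Ioi 0 = Ioc 0 (max t 0) := by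
    ext s; simp only [mem_inter_iff, mem_Iic, mem_Ioi, mem_Ioc, le_max_iff]; grind
  rw [halfLineMeasure, withDensity_apply _ measurableSet_Iic,
    Measure.restrict_restrict measurableSet_Iic, hset,
    intervalIntegral.integral_of_le (le_max_right _ _),
    ofReal_integral_eq_lintegral_ofReal hf.integrableOn_Ioc]
  exact ae_restrict_of_forall_mem measurableSet_Ioc fun s hs => h0 s hs.1

lemma ncChiSq_eq_halfLineMeasure (N : ℕ) (l : ℝ) :
    ncChiSq N l = halfLineMeasure (ncChiSqPdf N l) := by
  rw [ncChiSq, halfLineMeasure, ← withDensity_indicator measurableSet_Ioi]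
  congr with t
  by_cases ht : 0 < t <;> simp [ht]

lemma ncChiSq_succ_of_nonneg (n : ℕ) {l : ℝ} (hl : 0 ≤ l) :
    ncChiSq (n + 1) l = halfLineMeasure (poissonChiSqPdf n l) :=
  (ncChiSq_eq_halfLineMeasure _ l).trans <|
    halfLineMeasure_congr fun _ ht => ncChiSqPdf_eq_poissonChiSqPdf n hl ht

lemma ncChiSq_of_neg (n : ℕ) {l : ℝ} (hl : l < 0) : ncChiSq (n + 2) l = 0 := by
  rw [ncChiSq_eq_halfLineMeasure, halfLineMeasure_congr fun _ ht => ncChiSqPdf_of_neg n hl ht]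
  simp [halfLineMeasure]

instance isZeroOrProbabilityMeasure_ncChiSq (n : ℕ) (l : ℝ) :
    IsZeroOrProbabilityMeasure (ncChiSq (n + 2) l) := by
  rcases lt_or_ge l 0 with hl | hl
  · rw [ncChiSq_of_neg n hl]; infer_instance
  · have := isProbabilityMeasure_halfLineMeasure
      (fun _ ht => poissonChiSqPdf_nonneg (n + 1) hl (le_of_lt ht))
      (integral_Ioi_zero_poissonChiSqPdf (n + 1) hl)
    rw [ncChiSq_succ_of_nonneg (n + 1) hl]; infer_instance

lemma gammaMeasure_half_eq_halfLineMeasure (n : ℕ) :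
    gammaMeasure ((n + 1 : ℕ) : ℝ) (1 / 2) = halfLineMeasure (chiSqPdf n) := by
  rw [gammaMeasure, halfLineMeasure, ← withDensity_indicator measurableSet_Ioi]
  refine withDensity_congr_ae ?_
  filter_upwards [Measure.ae_ne volume 0] with t ht
  rcases ht.lt_or_gt with h | h
  · rw [gammaPDF_of_neg h, indicator_of_notMem (notMem_Ioi.2 h.le)]
  · rw [gammaPDF_of_nonneg h.le, indicator_of_mem (mem_Ioi.2 h), chiSqPdf, Nat.cast_succ,
      Real.Gamma_nat_eq_factorial, add_sub_cancel_right, Real.rpow_natCast, ← Nat.cast_succ,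
      Real.rpow_natCast, show -(1 / 2 * t) = -t / 2 by ring, one_div_pow]
    congr 1
    field_simp

/-! ### Maxima of i.i.d. variables -/

/-- Density `K F^(K-1) f` of the maximum of `K` independent variables with density `f` on `(0, ∞)`,
where `F t = ∫ s in 0..t, f s` is their distribution function. -/
noncomputable def maxPdf (K : ℕ) (f : ℝ → ℝ) (t : ℝ) : ℝ :=
  K * (∫ s in (0 : ℝ)..t, f s) ^ (K - 1) * f t

@[fun_prop]
lemma continuous_maxPdf {X : Type*} [TopologicalSpace X] (K : ℕ) {f : X → ℝ → ℝ} {t : X → ℝ}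
    (hf : Continuous (Function.uncurry f)) (ht : Continuous t) :
    Continuous fun x => maxPdf K (f x) (t x) := by
  have hcdf : Continuous fun x => ∫ s in (0 : ℝ)..t x, f x s :=
    intervalIntegral.continuous_parametric_intervalIntegral_of_continuous hf ht
  have hpdf : Continuous fun x => f x (t x) := hf.comp (continuous_id.prodMk ht)
  exact (continuous_const.mul (hcdf.pow _)).mul hpdf

lemma maxPdf_nonneg (K : ℕ) {f : ℝ → ℝ} (h0 : ∀ t ∈ Ioi 0, 0 ≤ f t) :
    ∀ t ∈ Ioi 0, 0 ≤ maxPdf K f t := fun t ht => by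
  have hcdf : 0 ≤ ∫ s in (0 : ℝ)..t, f s := by
    rw [intervalIntegral.integral_of_le (le_of_lt ht)]
    exact setIntegral_nonneg measurableSet_Ioc fun s hs => h0 s hs.1
  exact mul_nonneg (by positivity) (h0 t ht)

lemma integral_maxPdf {K : ℕ} (hK : K ≠ 0) {f : ℝ → ℝ} (hf : Continuous f) (t : ℝ) :
    ∫ s in (0 : ℝ)..t, maxPdf K f s = (∫ s in (0 : ℝ)..t, f s) ^ K := by
  have hcont : Continuous (maxPdf K f) :=
    continuous_maxPdf K (f := fun _ => f) (hf.comp continuous_snd) continuous_id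
  rw [intervalIntegral.integral_eq_sub_of_hasDerivAt (f' := maxPdf K f)
    (fun s _ => (hf.integral_hasStrictDerivAt 0 s).hasDerivAt.pow K)
    (hcont.intervalIntegrable 0 t)]
  simp only [Pi.pow_apply, intervalIntegral.integral_same, zero_pow hK, sub_zero]

section Maximum

variable {ι : Type*} [Fintype ι] [Nonempty ι]

lemma pi_iSup_preimage_Iic (ν : Measure ℝ) [SigmaFinite ν] (t : ℝ) :
    Measure.pi (fun _ : ι => ν) ((fun y : ι → ℝ => ⨆ i, y i) ⁻¹' Iic t) =
      ν (Iic t) ^ Fintype.card ι := by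
  have hbox : (fun y : ι → ℝ => ⨆ i, y i) ⁻¹' Iic t = univ.pi fun _ => Iic t := by
    ext y
    simp only [mem_preimage, mem_Iic, mem_univ_pi]
    exact ciSup_le_iff (finite_range y).bddAbove
  rw [hbox, Measure.pi_pi, Finset.prod_const, Finset.card_univ]

lemma map_iSup_pi_halfLineMeasure {f : ℝ → ℝ} (hf : Continuous f) (h0 : ∀ t ∈ Ioi 0, 0 ≤ f t)
    (hint : IntegrableOn f (Ioi 0)) :
    (Measure.pi fun _ : ι => halfLineMeasure f).map (fun y => ⨆ i, y i) =
      halfLineMeasure (maxPdf (Fintype.card ι) f) := by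
  have := isFiniteMeasure_halfLineMeasure hint
  have hcdf (t : ℝ) : 0 ≤ ∫ s in (0 : ℝ)..max t 0, f s := by
    rw [intervalIntegral.integral_of_le (le_max_right _ _)]
    exact setIntegral_nonneg measurableSet_Ioc fun s hs => h0 s hs.1
  refine Measure.ext_of_Iic _ _ fun t => ?_
  rw [Measure.map_apply (by fun_prop) measurableSet_Iic, pi_iSup_preimage_Iic,
    halfLineMeasure_Iic hf h0, halfLineMeasure_Iic (by fun_prop) (maxPdf_nonneg _ h0),
    integral_maxPdf Fintype.card_ne_zero hf, ENNReal.ofReal_pow (hcdf t)]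

end Maximum

lemma measurable_uncurry_maxPdf_poissonChiSqPdf (K n : ℕ) {Ω : Type*} [MeasurableSpace Ω]
    {l : Ω → ℝ} (hl : Measurable l) :
    Measurable (Function.uncurry fun ω => maxPdf K (poissonChiSqPdf n (l ω))) := by
  have hcont : Continuous fun z : ℝ × ℝ => maxPdf K (poissonChiSqPdf n z.1) z.2 :=
    continuous_maxPdf K (by unfold Function.uncurry; fun_prop) continuous_snd
  unfold Function.uncurry
  exact hcont.measurable.comp (f := fun p : Ω × ℝ => (l p.1, p.2)) (by fun_prop)

lemma maxPdf_poissonChiSqPdf_eq_marcumQ (K n : ℕ) {l t : ℝ} (hl : 0 ≤ l) (ht : 0 ≤ t) :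
    maxPdf K (poissonChiSqPdf (n + 1) l) t =
      K / 2 * (1 - marcumQ (n + 2) √l √t) ^ (K - 1) *
        (marcumQ (n + 2) √l √t - marcumQ (n + 1) √l √t) := by
  have hint := integrableOn_poissonChiSqPdf (n + 1) hl
  rw [marcumQ_sqrt_sqrt (n + 1) hl ht, marcumQ_sqrt_sqrt n hl ht,
    integral_Ioi_poissonChiSqPdf_succ_sub n hl ht, maxPdf,
    ← integral_Ioi_zero_poissonChiSqPdf (n + 1) hl, intervalIntegral.integral_Ioi_sub_Ioi hint ht]
  ring

/-! ### Mixtures -/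

theorem integral_compProd_eq_integral_mul_density {Ω E : Type*} [MeasurableSpace Ω]
    [MeasurableSpace E] {ν : Measure Ω} [SFinite ν] {κ : Kernel Ω E} [IsSFiniteKernel κ]
    {Z : E → ℝ} (hZ : Measurable Z) {d : Ω → ℝ → ℝ} (hd : Measurable (Function.uncurry d))
    (hd0 : ∀ᵐ ω ∂ν, ∀ t ∈ Ioi 0, 0 ≤ d ω t)
    (hlaw : ∀ᵐ ω ∂ν, (κ ω).map Z = halfLineMeasure (d ω))
    (hint : Integrable (fun p : Ω × E => Z p.2) (ν ⊗ₘ κ)) :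
    ∫ p, Z p.2 ∂(ν ⊗ₘ κ) = ∫ t in Ioi 0, t * ∫ ω, d ω t ∂ν := by
  obtain ⟨hfiber, hnorm⟩ := (Measure.integrable_compProd_iff hint.aestronglyMeasurable).1 hint
  have hexp {ω : Ω} (h0 : ∀ t ∈ Ioi 0, 0 ≤ d ω t) (hω : (κ ω).map Z = halfLineMeasure (d ω))
      {g : ℝ → ℝ} (hg : Measurable g) : ∫ y, g (Z y) ∂κ ω = ∫ t in Ioi 0, d ω t * g t := by
    rw [← integral_halfLineMeasure hd.of_uncurry_left h0, ← hω,
      integral_map hZ.aemeasurable hg.aestronglyMeasurable]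
  have hprod : Integrable (Function.uncurry fun ω t => d ω t * t)
      (ν.prod (volume.restrict (Ioi 0))) := by
    refine (integrable_prod_iff (hd.mul measurable_snd).aestronglyMeasurable).2
      ⟨?_, hnorm.congr ?_⟩
    · filter_upwards [hd0, hlaw, hfiber] with ω h0 hω hZω
      refine (integrable_halfLineMeasure_iff hd.of_uncurry_left h0 fun t => t).1 ?_
      rw [← hω]
      exact (integrable_map_measure measurable_id.aestronglyMeasurable hZ.aemeasurable).2 hZω
    · filter_upwards [hd0, hlaw] with ω h0 hω
      rw [hexp h0 hω measurable_norm]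
      exact setIntegral_congr_fun measurableSet_Ioi fun t ht => by
        simp [abs_of_nonneg (h0 t ht)]
  calc ∫ p, Z p.2 ∂(ν ⊗ₘ κ)
      = ∫ ω, (∫ y, Z y ∂κ ω) ∂ν := Measure.integral_compProd hint
    _ = ∫ ω, (∫ t in Ioi (0 : ℝ), d ω t * t) ∂ν := integral_congr_ae <| by
        filter_upwards [hd0, hlaw] with ω h0 hω using hexp h0 hω measurable_id
    _ = ∫ t in Ioi (0 : ℝ), ∫ ω, d ω t * t ∂ν := integral_integral_swap hprod
    _ = ∫ t in Ioi (0 : ℝ), t * ∫ ω, d ω t ∂ν := by simp_rw [integral_mul_const, mul_comm]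

theorem integral_iSup_compProd_pi_ncChiSq {Ω ι : Type*} [MeasurableSpace Ω] [Fintype ι]
    [Nonempty ι] (n : ℕ) {ν : Measure Ω} [SFinite ν] {κ : Kernel Ω (ι → ℝ)} [IsSFiniteKernel κ]
    {l : Ω → ℝ} (hl : Measurable l) (hl0 : ∀ᵐ ω ∂ν, 0 ≤ l ω)
    (hκ : ∀ᵐ ω ∂ν, κ ω = Measure.pi fun _ => ncChiSq (n + 2) (l ω))
    (hint : Integrable (fun p : Ω × (ι → ℝ) => ⨆ i, p.2 i) (ν ⊗ₘ κ)) :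
    ∫ p : Ω × (ι → ℝ), (⨆ i, p.2 i) ∂(ν ⊗ₘ κ) =
      ∫ t in Ioi 0, t * ∫ ω, Fintype.card ι / 2 *
        (1 - marcumQ (n + 2) √(l ω) √t) ^ (Fintype.card ι - 1) *
        (marcumQ (n + 2) √(l ω) √t - marcumQ (n + 1) √(l ω) √t) ∂ν := by
  have hnonneg {r : ℝ} (hr : 0 ≤ r) : ∀ t ∈ Ioi 0, 0 ≤ poissonChiSqPdf (n + 1) r t :=
    fun t ht => poissonChiSqPdf_nonneg (n + 1) hr (le_of_lt ht)
  have hlaw : ∀ᵐ ω ∂ν, (κ ω).map (fun y => ⨆ i, y i) =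
      halfLineMeasure (maxPdf (Fintype.card ι) (poissonChiSqPdf (n + 1) (l ω))) := by
    filter_upwards [hl0, hκ] with ω hω hκω
    rw [hκω, ncChiSq_succ_of_nonneg (n + 1) hω]
    exact map_iSup_pi_halfLineMeasure (by fun_prop) (hnonneg hω)
      (integrableOn_poissonChiSqPdf (n + 1) hω)
  rw [integral_compProd_eq_integral_mul_density (Z := fun y : ι → ℝ => ⨆ i, y i) (by fun_prop)
    (measurable_uncurry_maxPdf_poissonChiSqPdf _ (n + 1) hl)
    (hl0.mono fun ω hω => maxPdf_nonneg _ (hnonneg hω)) hlaw hint]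
  refine setIntegral_congr_fun measurableSet_Ioi fun t ht => congrArg (t * ·) ?_
  refine integral_congr_ae ?_
  filter_upwards [hl0] with ω hω
  exact maxPdf_poissonChiSqPdf_eq_marcumQ _ n hω (le_of_lt ht)

lemma isFiniteKernel_of_eq_pi_ncChiSq {Ω ι : Type*} [MeasurableSpace Ω] [Fintype ι] {n : ℕ}
    {κ : Kernel Ω (ι → ℝ)} {l : Ω → ℝ}
    (hκ : ∀ ω, κ ω = Measure.pi fun _ => ncChiSq (n + 2) (l ω)) : IsFiniteKernel κ := by
  refine ⟨1, ENNReal.one_lt_top, fun ω => ?_⟩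
  rw [hκ ω, Measure.pi_univ]
  exact Finset.prod_le_one' fun _ _ => prob_le_one

/-- Expected maximum harvested (normalized) power: `E[Z]` equals the double integral
`∫_0^∞ K t ∫_0^∞ r^{N-1}e^{-r/2}/(2^{N+1}Γ(N)) (1-Q_N)^{K-1}(Q_N - Q_{N-1}) dr dt`,
provided `Z = max_k Y_k` is integrable. -/
theorem stmt7 (N K : ℕ) (hN : 2 ≤ N) (hK : 1 ≤ K) (μ : ℝ) (hμ : μ ∈ Set.Ioo (0 : ℝ) 1)
    (κ : Kernel ℝ (Fin K → ℝ))
    (hκ : ∀ r, κ r = Measure.pi fun _ => ncChiSq N (μ ^ 2 / (1 - μ ^ 2) * r))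
    (hint : Integrable (fun p : ℝ × (Fin K → ℝ) => ⨆ k, p.2 k) (gammaMeasure N (1 / 2) ⊗ₘ κ)) :
    ∫ p : ℝ × (Fin K → ℝ), (⨆ k, p.2 k) ∂(gammaMeasure N (1 / 2) ⊗ₘ κ)
      = ∫ t in Ioi 0, K * t *
          ∫ r in Ioi 0,
            r ^ (N - 1) * Real.exp (-r / 2) / (2 ^ (N + 1) * Real.Gamma N)
              * (1 - marcumQ N (Real.sqrt (μ ^ 2 / (1 - μ ^ 2) * r)) (Real.sqrt t)) ^ (K - 1)
              * (marcumQ N (Real.sqrt (μ ^ 2 / (1 - μ ^ 2) * r)) (Real.sqrt t)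
                  - marcumQ (N - 1) (Real.sqrt (μ ^ 2 / (1 - μ ^ 2) * r)) (Real.sqrt t)) := by
  obtain ⟨n, rfl⟩ : ∃ n, N = n + 2 := ⟨N - 2, by omega⟩
  have hc : 0 ≤ μ ^ 2 / (1 - μ ^ 2) :=
    div_nonneg (sq_nonneg μ) (by nlinarith [hμ.1, hμ.2])
  have : Nonempty (Fin K) := ⟨⟨0, hK⟩⟩
  have : IsFiniteKernel κ := isFiniteKernel_of_eq_pi_ncChiSq hκ
  have : IsProbabilityMeasure (gammaMeasure ((n + 2 : ℕ) : ℝ) (1 / 2)) :=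
    isProbabilityMeasure_gammaMeasure (by positivity) (by norm_num)
  have hgamma := gammaMeasure_half_eq_halfLineMeasure (n + 1)
  have hnoncentrality : ∀ᵐ r ∂gammaMeasure ((n + 2 : ℕ) : ℝ) (1 / 2),
      0 ≤ μ ^ 2 / (1 - μ ^ 2) * r := by
    rw [hgamma]
    filter_upwards [ae_pos_halfLineMeasure _] with r hr using mul_nonneg hc hr.le
  rw [integral_iSup_compProd_pi_ncChiSq n (by fun_prop) hnoncentrality (ae_of_all _ hκ) hint,
    hgamma]
  refine setIntegral_congr_fun measurableSet_Ioi fun t _ => ?_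
  rw [integral_halfLineMeasure (continuous_chiSqPdf _).measurable
    fun r hr => chiSqPdf_nonneg _ (le_of_lt hr), mul_comm (K : ℝ) t, mul_assoc,
    ← integral_const_mul (K : ℝ)]
  refine congrArg (t * ·) (setIntegral_congr_fun measurableSet_Ioi fun r _ => ?_)
  simp only [chiSqPdf, Fintype.card_fin, show n + 2 - 1 = n + 1 by omega,
    show ((n + 2 : ℕ) : ℝ) = ((n + 1 : ℕ) : ℝ) + 1 by push_cast; ring,
    Real.Gamma_nat_eq_factorial]
  field_simp
  ring
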